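/- The set M_f^∞ of off-diagonally finite measures is closed in the complete metric space (M^∞, OT_∞), and hence (M_f^∞, OT_∞) is a complete metric space. -/

import Mathlib

/-! Common setup: the birth-death plane, Radon measures, partial optimal transport. -/

noncomputable section

open MeasureTheory Topology Filter Set
open scoped ENNReal

/-- The ambient plane `ℝ²` (with the sup-norm, i.e. `q = ∞`). -/
abbrev P2 : Type := ℝ × ℝ

/-- The birth-death plane `W = {(b,d) : b < d}`. -/
def Wbd : Set P2 := {p | p.1 < p.2}

/-- The closure `W̄` of the birth-death plane. -/
def Wcl : Set P2 := closure Wbd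

/-- The diagonal `Δ`. -/
def Diag : Set P2 := {p | p.1 = p.2}

/-- Distance from a point to the diagonal, `‖x - Δ‖`. -/
def distDiag (x : P2) : ℝ := Metric.infDist x Diag

/-- The pseudometric `d(x,y) = min(‖x-y‖, ‖x-Δ‖ + ‖y-Δ‖)` on `W̄`. -/
def dW (x y : P2) : ℝ := min (dist x y) (distDiag x + distDiag y)

/-- The support of a Borel measure: points all of whose neighborhoods have
positive measure. -/
def msupport {α : Type*} [TopologicalSpace α] [MeasurableSpace α] (μ : Measure α) : Set α :=
  {x | ∀ U ∈ 𝓝 x, 0 < μ U}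

/-- `μ` is a Radon measure on the subspace `S`: it vanishes off `S`, is inner regular
(on relatively open sets) by compact sets, outer regular (by relatively open sets), and finite
on compact subsets of `S`. -/
def RadonOn {α : Type*} [TopologicalSpace α] [MeasurableSpace α] (S : Set α)
    (μ : Measure α) : Prop :=
  μ Sᶜ = 0 ∧
  (∀ U : Set α, IsOpen U → μ (U ∩ S) = ⨆ (K : Set α) (_ : K ⊆ U ∩ S) (_ : IsCompact K), μ K) ∧
  (∀ E : Set α, E ⊆ S → MeasurableSet E →
    μ E = ⨅ (U : Set α) (_ : IsOpen U) (_ : E ⊆ U), μ (U ∩ S)) ∧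
  (∀ K : Set α, K ⊆ S → IsCompact K → μ K < ⊤)

/-- The set `M` of Radon measures on `W`. -/
def MRadon : Set (Measure P2) := {μ | RadonOn Wbd μ}

/-- `pers_∞(μ) = sup{‖x-Δ‖ : x ∈ spt μ}` (valued in `ℝ≥0∞`). -/
def persInf (μ : Measure P2) : ℝ≥0∞ := ⨆ x ∈ msupport μ, ENNReal.ofReal (distDiag x)

/-- The space `M^∞` of Radon measures on `W` with finite `∞`-persistence. -/
def MInf : Set (Measure P2) := {μ | RadonOn Wbd μ ∧ persInf μ < ⊤}

/-- A coupling (admissible transport plan) between `μ` and `ν`: a Radon measure on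
`W̄ × W̄` whose marginals restricted to Borel subsets of `W` are `μ` and `ν`. -/
def IsCoupling (π : Measure (P2 × P2)) (μ ν : Measure P2) : Prop :=
  RadonOn (Wcl ×ˢ Wcl) π ∧
  (∀ A : Set P2, A ⊆ Wbd → MeasurableSet A → π (A ×ˢ Wcl) = μ A) ∧
  (∀ B : Set P2, B ⊆ Wbd → MeasurableSet B → π (Wcl ×ˢ B) = ν B)

/-- The `∞`-cost of a transport plan: `sup {d(x,y) : (x,y) ∈ spt π}`. -/
def costInf (π : Measure (P2 × P2)) : ℝ≥0∞ :=
  ⨆ p ∈ msupport π, ENNReal.ofReal (dW p.1 p.2)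

/-- The partial `∞`-optimal transport distance. -/
def OT (μ ν : Measure P2) : ℝ≥0∞ :=
  ⨅ (π : Measure (P2 × P2)) (_ : IsCoupling π μ ν), costInf π

/-- `W_ε = {(x,y) : y - x > ε}`. -/
def Weps (ε : ℝ) : Set P2 := {p | p.2 - p.1 > ε}

/-- The space `M_f^∞` of off-diagonally finite measures. -/
def Mf : Set (Measure P2) := {μ | μ ∈ MInf ∧ ∀ ε : ℝ, 0 < ε → μ (Weps ε) < ⊤}

/-- The space `M_fin^∞` of finite measures in `M^∞`. -/
def Mfin : Set (Measure P2) := {μ | μ ∈ MInf ∧ μ Wbd < ⊤}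

/-- `f ∈ C_c(W)`: a continuous function, compactly supported, with support contained
in the open set `W` (extended by zero to the plane). -/
def IsCcW (f : P2 → ℝ) : Prop :=
  Continuous f ∧ HasCompactSupport f ∧ tsupport f ⊆ Wbd

/-- Convergence of a sequence of measures to `μ` in the distance `OT_∞`. -/
def OTConv (u : ℕ → Measure P2) (μ : Measure P2) : Prop :=
  Tendsto (fun n => OT (u n) μ) atTop (𝓝 0)

/-! ### Limits of measures along an ultrafilter -/

/-- The limit of an `ℝ≥0∞`-valued sequence along an ultrafilter. -/
def ultraLim (U : Ultrafilter ℕ) (f : ℕ → ℝ≥0∞) : ℝ≥0∞ := (U.map f).lim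

theorem tendsto_ultraLim (U : Ultrafilter ℕ) (f : ℕ → ℝ≥0∞) :
    Tendsto f U (𝓝 (ultraLim U f)) :=
  (U.map f).le_nhds_lim

theorem ultraLim_mono {U : Ultrafilter ℕ} {f g : ℕ → ℝ≥0∞} (h : ∀ᶠ k in (U : Filter ℕ), f k ≤ g k) :
    ultraLim U f ≤ ultraLim U g :=
  le_of_tendsto_of_tendsto (tendsto_ultraLim U f) (tendsto_ultraLim U g) h

theorem ultraLim_const (U : Ultrafilter ℕ) (c : ℝ≥0∞) : ultraLim U (fun _ => c) = c :=
  tendsto_nhds_unique (tendsto_ultraLim U _) tendsto_const_nhds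

theorem ultraLim_le {U : Ultrafilter ℕ} {f : ℕ → ℝ≥0∞} {c : ℝ≥0∞}
    (h : ∀ᶠ k in (U : Filter ℕ), f k ≤ c) : ultraLim U f ≤ c :=
  le_of_tendsto (tendsto_ultraLim U f) h

theorem ultraLim_add (U : Ultrafilter ℕ) (f g : ℕ → ℝ≥0∞) :
    ultraLim U (fun k => f k + g k) = ultraLim U f + ultraLim U g :=
  tendsto_nhds_unique (tendsto_ultraLim U _) ((tendsto_ultraLim U f).add (tendsto_ultraLim U g))

/-- A sequence of measures that is bounded on every compact set has a vague limit along every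
ultrafilter. -/
theorem exists_vague_ultraLim {X : Type*} [TopologicalSpace X] [T2Space X] [LocallyCompactSpace X]
    [MeasurableSpace X] [BorelSpace X] (U : Ultrafilter ℕ) (m : ℕ → Measure X)
    (hb : ∀ K, IsCompact K → ∃ C : ℝ≥0∞, C < ⊤ ∧ ∀ᶠ k in (U : Filter ℕ), m k K ≤ C) :
    ∃ μ : Measure X, μ.Regular ∧ (∀ O, IsOpen O → μ O ≤ ultraLim U (fun k => m k O)) ∧
      (∀ K, IsCompact K → ultraLim U (fun k => m k K) ≤ μ K) := by
  have hfin : ∀ K : TopologicalSpace.Compacts X, ultraLim U (fun k => m k K) ≠ ⊤ := by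
    intro K
    obtain ⟨C, hC, h⟩ := hb K K.isCompact
    exact ((ultraLim_le h).trans_lt hC).ne
  let c : Content X :=
    { toFun := fun K => (ultraLim U (fun k => m k K)).toNNReal
      mono' := fun K₁ K₂ h => ENNReal.toNNReal_mono (hfin K₂)
        (ultraLim_mono (Eventually.of_forall fun k => measure_mono h))
      sup_disjoint' := by
        intro K₁ K₂ hd _ h₂
        rw [← ENNReal.toNNReal_add (hfin K₁) (hfin K₂), ← ultraLim_add]
        congr 2
        funext k
        rw [TopologicalSpace.Compacts.coe_sup]
        exact measure_union hd h₂.measurableSet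
      sup_le' := by
        intro K₁ K₂
        rw [← ENNReal.toNNReal_add (hfin K₁) (hfin K₂), ← ultraLim_add]
        refine ENNReal.toNNReal_mono ?_ (ultraLim_mono (Eventually.of_forall fun k => ?_))
        · rw [ultraLim_add]
          exact ENNReal.add_ne_top.2 ⟨hfin K₁, hfin K₂⟩
        · rw [TopologicalSpace.Compacts.coe_sup]
          exact measure_union_le _ _ }
  have hc : ∀ K : TopologicalSpace.Compacts X, c K = ultraLim U (fun k => m k K) := fun K =>
    ENNReal.coe_toNNReal (hfin K)
  refine ⟨c.measure, inferInstance, fun O hO => ?_, fun K hK => ?_⟩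
  · rw [c.measure_apply hO.measurableSet, c.outerMeasure_of_isOpen O hO]
    refine iSup₂_le fun K hK => ?_
    rw [hc]
    exact ultraLim_mono (Eventually.of_forall fun k => measure_mono hK)
  · rw [c.measure_apply hK.measurableSet]
    exact (hc ⟨K, hK⟩).symm.trans_le (c.le_outerMeasure_compacts ⟨K, hK⟩)

/-! ### Radon measures on a locally compact subspace -/

/-- On a locally compact Borel subspace of a second countable metric space, finiteness on compact
sets implies the regularity properties of a Radon measure. -/
theorem radonOn_of_compact_lt_top {X : Type*} [MetricSpace X] [SecondCountableTopology X]
    [MeasurableSpace X] [BorelSpace X] {S : Set X} (hS : MeasurableSet S) [LocallyCompactSpace S]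
    {μ : Measure X} (h0 : μ Sᶜ = 0) (hK : ∀ K ⊆ S, IsCompact K → μ K < ⊤) : RadonOn S μ := by
  have hemb := MeasurableEmbedding.subtype_coe hS
  let m : Measure S := μ.comap Subtype.val
  have hm : ∀ A : Set S, m A = μ (Subtype.val '' A) := fun A => hemb.comap_apply μ A
  have : IsFiniteMeasureOnCompacts m := ⟨fun K hKc => by
    rw [hm]
    exact hK _ (by simp) (hKc.image continuous_subtype_val)⟩
  refine ⟨h0, fun U hU => le_antisymm ?_ ?_, fun E hE hEm => le_antisymm ?_ ?_, hK⟩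
  · have h1 : U ∩ S = Subtype.val '' (Subtype.val ⁻¹' U : Set S) := by
      rw [Subtype.image_preimage_coe, inter_comm]
    rw [h1, ← hm, (hU.preimage continuous_subtype_val).measure_eq_iSup_isCompact]
    refine iSup₂_le fun K hKU => iSup_le fun hKc => ?_
    rw [hm]
    exact le_iSup₂_of_le (Subtype.val '' K) (image_mono hKU)
      (le_iSup_of_le (hKc.image continuous_subtype_val) le_rfl)
  · exact iSup₂_le fun K hKU => iSup_le fun _ => measure_mono hKU
  · exact le_iInf₂ fun U _ => le_iInf fun hEU => measure_mono (subset_inter hEU hE)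
  · have h1 : E = Subtype.val '' (Subtype.val ⁻¹' E : Set S) := by
      rw [Subtype.image_preimage_coe, inter_eq_right.2 hE]
    conv_rhs => rw [h1, ← hm, Set.measure_eq_iInf_isOpen]
    refine le_iInf₂ fun V hV => le_iInf fun hVo => ?_
    obtain ⟨O, hO, rfl⟩ := isOpen_induced_iff.1 hVo
    refine iInf₂_le_of_le O hO (iInf_le_of_le ?_ ?_)
    · intro x hx
      exact hV (a := ⟨x, hE hx⟩) hx
    · rw [hm, Subtype.image_preimage_coe, inter_comm]

/-- Comparison of two measures on an open set through slightly enlarged compact sets. -/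
theorem restrict_le_of_le_cthickening {X : Type*} [MetricSpace X] [ProperSpace X]
    [MeasurableSpace X] [BorelSpace X] {σ ν : Measure X} {V : Set X}
    (hV : IsOpen V) (hσ : σ V < ⊤) (hν : ∀ K ⊆ V, IsCompact K → ν K < ⊤)
    (h : ∀ K, IsCompact K → ∀ δ, 0 < δ → Metric.cthickening δ K ⊆ V →
      σ K ≤ ν (Metric.cthickening δ K)) : σ.restrict V ≤ ν := by
  have hcomp : ∀ K ⊆ V, IsCompact K → σ K ≤ ν K := by
    intro K hKV hK
    obtain ⟨δ, hδ, hδV⟩ := hK.exists_cthickening_subset_open hV hKV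
    have ht := tendsto_measure_cthickening_of_isClosed (μ := ν)
      ⟨δ, hδ, (hν _ hδV hK.cthickening).ne⟩ hK.isClosed
    refine ge_of_tendsto (ht.mono_left (nhdsWithin_le_nhds (s := Ioi 0))) ?_
    filter_upwards [Ioo_mem_nhdsGT hδ] with t ht
    exact h K hK t ht.1 ((Metric.cthickening_mono ht.2.le K).trans hδV)
  have : IsFiniteMeasure (σ.restrict V) := ⟨by simpa using hσ⟩
  refine Measure.le_iff.2 fun A hA => ?_
  have hAV : σ.restrict V A = σ.restrict V (A ∩ V) := by
    rw [Measure.restrict_apply hA, Measure.restrict_apply (hA.inter hV.measurableSet), inter_assoc,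
      inter_self]
  rw [hAV, (hA.inter hV.measurableSet).measure_eq_iSup_isCompact_of_ne_top (measure_ne_top _ _)]
  refine iSup₂_le fun K hKA => iSup_le fun hK => ?_
  calc σ.restrict V K ≤ σ K := Measure.restrict_apply_le V K
    _ ≤ ν K := hcomp K (hKA.trans inter_subset_right) hK
    _ ≤ ν A := measure_mono (hKA.trans inter_subset_left)

/-! ### Geometry of the birth-death plane -/

theorem distDiag_eq (x : P2) : distDiag x = |x.2 - x.1| / 2 := by
  have hmem : ((x.1 + x.2) / 2, (x.1 + x.2) / 2) ∈ Diag := rfl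
  refine le_antisymm ?_ ((Metric.le_infDist ⟨_, hmem⟩).2 ?_)
  · refine (Metric.infDist_le_dist_of_mem hmem).trans ?_
    rw [Prod.dist_eq, Real.dist_eq, Real.dist_eq]
    refine max_le ?_ ?_ <;> simp only [abs_le] <;> constructor <;>
      cases abs_cases (x.2 - x.1) <;> linarith
  · rintro ⟨y, z⟩ (rfl : y = z)
    rw [Prod.dist_eq, Real.dist_eq, Real.dist_eq]
    have h1 := le_max_left |x.1 - y| |x.2 - y|
    have h2 := le_max_right |x.1 - y| |x.2 - y|
    have h3 : |x.2 - x.1| ≤ |x.2 - y| + |x.1 - y| := by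
      simpa [abs_sub_comm] using abs_sub_le x.2 y x.1
    dsimp only
    linarith

theorem Wcl_eq : Wcl = {p : P2 | p.1 ≤ p.2} := by
  refine Subset.antisymm (closure_lt_subset_le continuous_fst continuous_snd) ?_
  intro p hp
  refine Metric.mem_closure_iff.2 fun ε hε => ⟨(p.1, p.2 + ε / 2), ?_, ?_⟩
  · have : p.1 ≤ p.2 := hp
    change p.1 < p.2 + ε / 2
    linarith
  · rw [Prod.dist_eq, Real.dist_eq, Real.dist_eq, max_lt_iff]
    refine ⟨by simpa using hε, ?_⟩
    dsimp only
    rw [abs_lt]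
    constructor <;> linarith

theorem isClosed_Wcl : IsClosed Wcl := isClosed_closure

theorem isOpen_Wbd : IsOpen Wbd := isOpen_lt continuous_fst continuous_snd

theorem isOpen_Weps (ε : ℝ) : IsOpen (Weps ε) :=
  isOpen_lt continuous_const (continuous_snd.sub continuous_fst)

theorem Weps_subset_Wbd {ε : ℝ} (hε : 0 ≤ ε) : Weps ε ⊆ Wbd := by
  intro p hp
  have : p.2 - p.1 > ε := hp
  change p.1 < p.2
  linarith

theorem Wbd_subset_Wcl : Wbd ⊆ Wcl := subset_closure

theorem exists_subset_Weps {K : Set P2} (hK : IsCompact K) (hKW : K ⊆ Wbd) :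
    ∃ ε, 0 < ε ∧ K ⊆ Weps ε := by
  rcases K.eq_empty_or_nonempty with rfl | hne
  · exact ⟨1, one_pos, empty_subset _⟩
  obtain ⟨x, hx, hmin⟩ := hK.exists_isMinOn hne
    (f := fun p : P2 => p.2 - p.1) (by fun_prop)
  have hxW : x.1 < x.2 := hKW hx
  refine ⟨(x.2 - x.1) / 2, by linarith, fun y hy => ?_⟩
  have : x.2 - x.1 ≤ y.2 - y.1 := hmin hy
  change y.2 - y.1 > (x.2 - x.1) / 2
  linarith

theorem continuous_dW : Continuous fun p : P2 × P2 => dW p.1 p.2 := by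
  simp only [dW, distDiag_eq]
  fun_prop

theorem dW_comm (x y : P2) : dW x y = dW y x := by
  simp only [dW, dist_comm, add_comm]

theorem gap_sub_le_dist (x y : P2) : (x.2 - x.1) - (y.2 - y.1) ≤ 2 * dist x y := by
  rw [Prod.dist_eq, Real.dist_eq, Real.dist_eq]
  have h1 := le_max_left |x.1 - y.1| |x.2 - y.2|
  have h2 := le_max_right |x.1 - y.1| |x.2 - y.2|
  have h3 := neg_abs_le (x.1 - y.1)
  have h4 := le_abs_self (x.2 - y.2)
  linarith

/-- Far from the diagonal, `dW` is the distance of the plane. -/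
theorem dist_lt_of_dW_lt {x y : P2} {r : ℝ} (h : dW x y < r) (hx : 2 * r ≤ x.2 - x.1) :
    dist x y < r := by
  rcases min_lt_iff.1 h with h | h
  · exact h
  · rw [distDiag_eq, distDiag_eq] at h
    have h1 := le_abs_self (x.2 - x.1)
    have h2 := abs_nonneg (y.2 - y.1)
    linarith

/-! ### Supports -/

theorem measure_compl_msupport {X : Type*} [TopologicalSpace X] [SecondCountableTopology X]
    [MeasurableSpace X] (μ : Measure X) : μ (msupport μ)ᶜ = 0 := by
  refine measure_null_of_locally_null _ fun x hx => ?_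
  obtain ⟨u, hu, h0⟩ : ∃ u ∈ 𝓝 x, ¬ 0 < μ u := by
    simpa only [msupport, mem_compl_iff, mem_ofPred_eq, not_forall, exists_prop] using hx
  exact ⟨u, mem_nhdsWithin_of_mem_nhds hu, by simpa using h0⟩

theorem msupport_subset_of_isClosed {X : Type*} [TopologicalSpace X]
    [MeasurableSpace X] {μ : Measure X} {F : Set X} (hF : IsClosed F) (h0 : μ Fᶜ = 0) :
    msupport μ ⊆ F := by
  intro x hx
  by_contra hxF
  exact (hx _ (hF.isOpen_compl.mem_nhds hxF)).ne' h0

/-! ### Mass transfer under a coupling of small cost -/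

theorem exists_coupling_of_OT_lt {μ ν : Measure P2} {r : ℝ} (h : OT μ ν < ENNReal.ofReal r) :
    ∃ π, IsCoupling π μ ν ∧ ∀ᵐ p ∂π, p ∈ Wcl ×ˢ Wcl ∧ dW p.1 p.2 < r := by
  simp only [OT, iInf_lt_iff] at h
  obtain ⟨π, hπ, hc⟩ := h
  refine ⟨π, hπ, ?_⟩
  have h1 : ∀ᵐ p ∂π, p ∈ Wcl ×ˢ Wcl := hπ.1.1
  have h2 : ∀ᵐ p ∂π, p ∈ msupport π := measure_compl_msupport π
  filter_upwards [h1, h2] with p hp hps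
  refine ⟨hp, ?_⟩
  have h3 : ENNReal.ofReal (dW p.1 p.2) ≤ costInf π :=
    le_iSup₂ (f := fun p (_ : p ∈ msupport π) => ENNReal.ofReal (dW p.1 p.2)) p hps
  exact (ENNReal.ofReal_lt_ofReal_iff_of_nonneg
    (le_min dist_nonneg (add_nonneg Metric.infDist_nonneg Metric.infDist_nonneg))).1
    (h3.trans_lt hc)

theorem measure_Weps_le_of_OT_lt {μ ν : Measure P2} {r ε : ℝ} (h : OT μ ν < ENNReal.ofReal r)
    (hr : 0 ≤ r) (hε : 2 * r ≤ ε) : ν (Weps ε) ≤ μ (Weps (ε - 2 * r)) := by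
  obtain ⟨π, hπ, hae⟩ := exists_coupling_of_OT_lt h
  rw [← hπ.2.2 _ (Weps_subset_Wbd (by linarith)) (isOpen_Weps ε).measurableSet,
    ← hπ.2.1 _ (Weps_subset_Wbd (by linarith)) (isOpen_Weps _).measurableSet]
  refine measure_mono_ae ?_
  filter_upwards [hae] with p hp hpε
  have h2 : p.2.2 - p.2.1 > ε := hpε.2
  refine ⟨?_, hp.1.2⟩
  have hd := dist_lt_of_dW_lt (dW_comm p.1 p.2 ▸ hp.2) (by linarith)
  have := gap_sub_le_dist p.2 p.1
  change p.1.2 - p.1.1 > ε - 2 * r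
  linarith

theorem mem_Mf_of_tendsto {μ : Measure P2} (hμ : μ ∈ MInf) {u : ℕ → Measure P2}
    (hu : ∀ n, u n ∈ Mf) (h : Tendsto (fun n => OT (u n) μ) atTop (𝓝 0)) : μ ∈ Mf := by
  refine ⟨hμ, fun ε hε => ?_⟩
  obtain ⟨n, hn⟩ := (h.eventually_lt_const
    (ENNReal.ofReal_pos.2 (show (0 : ℝ) < ε / 4 by linarith))).exists
  exact (measure_Weps_le_of_OT_lt hn (by linarith) (by linarith)).trans_lt
    ((hu n).2 _ (by linarith))

/-! ### Completing a partial transport plan -/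

/-- A map from the birth-death plane to the diagonal under which the preimages of compact sets are
compact: it sends points close to the diagonal far away. -/
def escape (x : P2) : P2 := (‖x‖ + (x.2 - x.1)⁻¹, ‖x‖ + (x.2 - x.1)⁻¹)

theorem measurable_escape : Measurable escape := by
  unfold escape
  fun_prop

theorem distDiag_escape (x : P2) : distDiag (escape x) = 0 := by
  simp [distDiag_eq, escape]

theorem escape_mem_Wcl (x : P2) : escape x ∈ Wcl := by
  rw [Wcl_eq]
  exact le_refl (‖x‖ + (x.2 - x.1)⁻¹)

theorem escape_notMem_Wbd (x : P2) : escape x ∉ Wbd :=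
  lt_irrefl (‖x‖ + (x.2 - x.1)⁻¹)

theorem measure_escape_preimage_lt_top {μ : Measure P2} (hμ : RadonOn Wbd μ) {K : Set P2}
    (hK : IsCompact K) : μ (escape ⁻¹' K) < ⊤ := by
  obtain ⟨R, hR, hKR⟩ := hK.isBounded.exists_pos_norm_le
  let C : Set P2 := Metric.closedBall 0 R ∩ {x | 1 ≤ (x.2 - x.1) * R}
  have hC : IsCompact C := (isCompact_closedBall 0 R).inter_right
    (isClosed_le continuous_const (by fun_prop))
  have hCW : C ⊆ Wbd := by
    intro x hx
    have h1 : 1 ≤ (x.2 - x.1) * R := hx.2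
    have h2 : 0 < x.2 - x.1 := pos_of_mul_pos_left (one_pos.trans_le h1) hR.le
    exact sub_pos.1 h2
  refine lt_of_le_of_lt (measure_mono_ae ?_) (hμ.2.2.2 C hCW hC)
  have hW : ∀ᵐ x ∂μ, x ∈ Wbd := hμ.1
  filter_upwards [hW] with x hxW hxK
  have hgap : 0 < x.2 - x.1 := sub_pos.2 hxW
  have h1 : ‖x‖ + (x.2 - x.1)⁻¹ ≤ R :=
    (le_abs_self _).trans ((norm_fst_le (escape x)).trans (hKR _ hxK))
  have h2 := norm_nonneg x
  have h3 := inv_pos.2 hgap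
  refine ⟨mem_closedBall_zero_iff.2 (by linarith), ?_⟩
  have h4 : (x.2 - x.1)⁻¹ ≤ R := by linarith
  exact (inv_le_iff_one_le_mul₀' hgap).1 h4

/-- What a finite submeasure agreeing with `μ` on `Weps a` leaves out of `μ`. -/
theorem exists_remainder {μ σ : Measure P2} [IsFiniteMeasure σ] {a : ℝ}
    (hμ : RadonOn Wbd μ) (h1 : σ ≤ μ) (h2 : μ (Weps a) ≤ σ (Weps a)) :
    ∃ α : Measure P2, α + σ = μ ∧ α ≤ μ ∧ ∀ᵐ x ∂α, x ∈ Wbd ∧ distDiag x ≤ a / 2 := by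
  have hadd := Measure.sub_add_cancel_of_le h1
  have hle : μ - σ ≤ μ := Measure.sub_le
  refine ⟨μ - σ, hadd, hle, ?_⟩
  have h0 : (μ - σ) (Weps a) = 0 := by
    rw [Measure.sub_apply (isOpen_Weps a).measurableSet h1]
    exact tsub_eq_zero_of_le h2
  have hW : ∀ᵐ x ∂(μ - σ), x ∈ Wbd := Measure.absolutelyContinuous_of_le hle hμ.1
  have ha : ∀ᵐ x ∂(μ - σ), x ∉ Weps a := measure_eq_zero_iff_ae_notMem.1 h0
  filter_upwards [hW, ha] with x hx hxa
  refine ⟨hx, ?_⟩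
  have h3 : x.2 - x.1 ≤ a := not_lt.1 hxa
  have h4 : x.1 < x.2 := hx
  rw [distDiag_eq, abs_of_pos (by linarith)]
  linarith

/-- A finite partial transport plan exhausting both measures on `Weps a` extends to a coupling:
the remaining mass is sent to the diagonal. -/
theorem OT_le_of_partial_plan {μ ν : Measure P2} {ρ : Measure (P2 × P2)} [IsFiniteMeasure ρ]
    {a : ℝ} (ha : 0 ≤ a) (hμ : RadonOn Wbd μ) (hν : RadonOn Wbd ν)
    (hρ : ∀ᵐ p ∂ρ, p ∈ Wcl ×ˢ Wcl ∧ dW p.1 p.2 ≤ a)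
    (hμ₁ : ρ.map Prod.fst ≤ μ) (hμ₂ : μ (Weps a) ≤ ρ.map Prod.fst (Weps a))
    (hν₁ : ρ.map Prod.snd ≤ ν) (hν₂ : ν (Weps a) ≤ ρ.map Prod.snd (Weps a)) :
    OT μ ν ≤ ENNReal.ofReal a := by
  obtain ⟨α, hα, hαμ, hαae⟩ := exists_remainder hμ hμ₁ hμ₂
  obtain ⟨β, hβ, hβν, hβae⟩ := exists_remainder hν hν₁ hν₂
  let f : P2 → P2 × P2 := fun x => (x, escape x)
  let g : P2 → P2 × P2 := fun x => (escape x, x)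
  have hf : Measurable f := measurable_id.prodMk measurable_escape
  have hg : Measurable g := measurable_escape.prodMk measurable_id
  let π : Measure (P2 × P2) := ρ + α.map f + β.map g
  have hπ : ∀ A, MeasurableSet A → π A = ρ A + α (f ⁻¹' A) + β (g ⁻¹' A) := fun A hA => by
    simp only [π, Measure.add_apply, Measure.map_apply hf hA, Measure.map_apply hg hA]
  have hS : IsClosed (Wcl ×ˢ Wcl) := isClosed_Wcl.prod isClosed_Wcl
  have hae : ∀ᵐ p ∂π, p ∈ Wcl ×ˢ Wcl ∧ dW p.1 p.2 ≤ a := by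
    have hmeas : MeasurableSet {p : P2 × P2 | p ∈ Wcl ×ˢ Wcl ∧ dW p.1 p.2 ≤ a} :=
      (hS.inter (isClosed_le continuous_dW continuous_const)).measurableSet
    refine ae_add_measure_iff.2 ⟨ae_add_measure_iff.2 ⟨hρ, ?_⟩, ?_⟩
    · rw [ae_map_iff hf.aemeasurable hmeas]
      filter_upwards [hαae] with x hx
      refine ⟨⟨Wbd_subset_Wcl hx.1, escape_mem_Wcl x⟩, (min_le_right _ _).trans ?_⟩
      rw [distDiag_escape]
      linarith [hx.2]
    · rw [ae_map_iff hg.aemeasurable hmeas]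
      filter_upwards [hβae] with x hx
      refine ⟨⟨escape_mem_Wcl x, Wbd_subset_Wcl hx.1⟩, (min_le_right _ _).trans ?_⟩
      rw [distDiag_escape]
      linarith [hx.2]
  have hcoup : IsCoupling π μ ν := by
    have : LocallyCompactSpace (Wcl ×ˢ Wcl : Set (P2 × P2)) := hS.locallyCompactSpace
    refine ⟨radonOn_of_compact_lt_top hS.measurableSet (hae.mono fun p hp => hp.1) ?_, ?_, ?_⟩
    · intro K _ hK
      rw [hπ K hK.measurableSet]
      refine ENNReal.add_lt_top.2 ⟨ENNReal.add_lt_top.2 ⟨measure_lt_top _ _, ?_⟩, ?_⟩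
      · exact (hαμ _).trans_lt ((measure_mono (t := escape ⁻¹' (Prod.snd '' K))
          fun x hx => ⟨f x, hx, rfl⟩).trans_lt (measure_escape_preimage_lt_top hμ (hK.image continuous_snd)))
      · exact (hβν _).trans_lt ((measure_mono (t := escape ⁻¹' (Prod.fst '' K))
          fun x hx => ⟨g x, hx, rfl⟩).trans_lt (measure_escape_preimage_lt_top hν (hK.image continuous_fst)))
    · intro A hAW hA
      have hfA : f ⁻¹' (A ×ˢ Wcl) = A := by
        ext x
        simp [f, escape_mem_Wcl]
      have hgA : g ⁻¹' (A ×ˢ Wcl) = ∅ :=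
        eq_empty_of_forall_notMem fun x hx => escape_notMem_Wbd x (hAW hx.1)
      have hρA : ρ (A ×ˢ Wcl) = ρ.map Prod.fst A := by
        rw [Measure.map_apply measurable_fst hA]
        refine measure_congr ?_
        filter_upwards [hρ] with p hp
        exact propext ⟨fun h => h.1, fun h => ⟨h, hp.1.2⟩⟩
      rw [hπ _ (hA.prod isClosed_Wcl.measurableSet), hfA, hgA, hρA, measure_empty, add_zero,
        add_comm, ← hα, Measure.add_apply]
    · intro B hBW hB
      have hfB : f ⁻¹' (Wcl ×ˢ B) = ∅ :=
        eq_empty_of_forall_notMem fun x hx => escape_notMem_Wbd x (hBW hx.2)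
      have hgB : g ⁻¹' (Wcl ×ˢ B) = B := by
        ext x
        simp [g, escape_mem_Wcl]
      have hρB : ρ (Wcl ×ˢ B) = ρ.map Prod.snd B := by
        rw [Measure.map_apply measurable_snd hB]
        refine measure_congr ?_
        filter_upwards [hρ] with p hp
        exact propext ⟨fun h => h.2, fun h => ⟨hp.1.1, h⟩⟩
      rw [hπ _ (isClosed_Wcl.measurableSet.prod hB), hfB, hgB, hρB, measure_empty, add_zero,
        add_comm, ← hβ, Measure.add_apply]
  refine (iInf₂_le π hcoup).trans (iSup₂_le fun p hp => ENNReal.ofReal_le_ofReal ?_)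
  exact msupport_subset_of_isClosed (isClosed_le continuous_dW continuous_const)
    (hae.mono fun p hp => hp.2) hp

/-! ### Passing to the limit -/

/-- `μ` is a vague limit on the open set `V` of the sequence `m` along the ultrafilter `U`. -/
def IsVagueLim {X : Type*} [TopologicalSpace X] [MeasurableSpace X] (U : Ultrafilter ℕ) (V : Set X)
    (m : ℕ → Measure X) (μ : Measure X) : Prop :=
  (∀ O ⊆ V, IsOpen O → μ O ≤ ultraLim U (fun k => m k O)) ∧
    (∀ K ⊆ V, IsCompact K → ultraLim U (fun k => m k K) ≤ μ K)

theorem IsVagueLim.const {X : Type*} [TopologicalSpace X] [MeasurableSpace X] (U : Ultrafilter ℕ)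
    (V : Set X) (μ : Measure X) : IsVagueLim U V (fun _ => μ) μ :=
  ⟨fun _ _ _ => (ultraLim_const U _).ge, fun _ _ _ => (ultraLim_const U _).le⟩

/-- Marginals of vague limits of plans concentrated on a set that is proper over the base. -/
theorem marginal_of_isVagueLim {U : Ultrafilter ℕ} {ρ : ℕ → Measure (P2 × P2)}
    {ρ' : Measure (P2 × P2)} [IsFiniteMeasure ρ'] {v : ℕ → Measure P2} {v' : Measure P2} {a : ℝ}
    {D : Set (P2 × P2)} {f : P2 × P2 → P2} (hf : Continuous f) (ha : 0 ≤ a)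
    (hρ : IsVagueLim U univ ρ ρ') (hv : IsVagueLim U Wbd v v')
    (hD : ∀ᶠ k in (U : Filter ℕ), ∀ᵐ p ∂ρ k, p ∈ D)
    (hDproper : ∀ K, IsCompact K → ∃ B, IsCompact B ∧ f ⁻¹' K ∩ D ⊆ B)
    (hle : ∀ᶠ k in (U : Filter ℕ), ∀ A ⊆ Wbd, MeasurableSet A → ρ k (f ⁻¹' A) ≤ v k A)
    (hge : ∀ᶠ k in (U : Filter ℕ), ∀ A ⊆ Weps a, MeasurableSet A → v k A ≤ ρ k (f ⁻¹' A))
    (hfin : ∀ K ⊆ Wbd, IsCompact K → v' K < ⊤) (hfin' : v' (Weps a) < ⊤)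
    (hW : ∀ᵐ p ∂ρ', f p ∈ Wbd) :
    ρ'.map f ≤ v' ∧ v' (Weps a) ≤ ρ'.map f (Weps a) := by
  constructor
  · have h1 : (ρ'.map f).restrict Wbd = ρ'.map f := Measure.restrict_eq_self_of_ae_mem
      ((ae_map_iff hf.aemeasurable isOpen_Wbd.measurableSet).2 hW)
    rw [← h1]
    refine restrict_le_of_le_cthickening isOpen_Wbd (measure_lt_top _ _) hfin ?_
    intro K hK δ hδ hKV
    have hth := Metric.thickening_subset_cthickening δ K
    rw [Measure.map_apply hf.measurable hK.measurableSet]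
    calc ρ' (f ⁻¹' K) ≤ ρ' (f ⁻¹' Metric.thickening δ K) :=
          measure_mono (preimage_mono (Metric.self_subset_thickening hδ K))
      _ ≤ ultraLim U fun k => ρ k (f ⁻¹' Metric.thickening δ K) :=
          hρ.1 _ (subset_univ _) (Metric.isOpen_thickening.preimage hf)
      _ ≤ ultraLim U fun k => v k (Metric.cthickening δ K) := by
          refine ultraLim_mono (hle.mono fun k hk => ?_)
          exact (measure_mono (preimage_mono hth)).trans
            (hk _ hKV Metric.isClosed_cthickening.measurableSet)
      _ ≤ v' (Metric.cthickening δ K) := hv.2 _ hKV hK.cthickening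
  · have h1 : v'.restrict (Weps a) ≤ ρ'.map f := by
      refine restrict_le_of_le_cthickening (isOpen_Weps a) hfin' (fun _ _ _ => measure_lt_top _ _) ?_
      intro K hK δ hδ hKV
      have hth := Metric.thickening_subset_cthickening δ K
      have hC : IsCompact (Metric.cthickening δ K) := hK.cthickening
      obtain ⟨B, hB, hKB⟩ := hDproper _ hC
      rw [Measure.map_apply hf.measurable hC.measurableSet]
      calc v' K ≤ v' (Metric.thickening δ K) :=
            measure_mono (Metric.self_subset_thickening hδ K)
        _ ≤ ultraLim U fun k => v k (Metric.thickening δ K) :=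
            hv.1 _ ((hth.trans hKV).trans (Weps_subset_Wbd ha)) Metric.isOpen_thickening
        _ ≤ ultraLim U fun k => ρ k (f ⁻¹' Metric.cthickening δ K ∩ B) := by
            refine ultraLim_mono ((hge.and hD).mono fun k hk => ?_)
            refine (measure_mono hth).trans ((hk.1 _ hKV hC.measurableSet).trans
              (measure_mono_ae ?_))
            filter_upwards [hk.2] with p hpD hp
            exact ⟨hp, hKB ⟨hp, hpD⟩⟩
        _ ≤ ρ' (f ⁻¹' Metric.cthickening δ K ∩ B) :=
            hρ.2 _ (subset_univ _) (hB.inter_left (hC.isClosed.preimage hf))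
        _ ≤ ρ' (f ⁻¹' Metric.cthickening δ K) := measure_mono inter_subset_left
    simpa using h1 (Weps a)

/-- A sequence of measures bounded on the compact subsets of the birth-death plane has a vague limit
which is a Radon measure. -/
theorem exists_radonOn_isVagueLim (U : Ultrafilter ℕ) (v : ℕ → Measure P2)
    (hb : ∀ K ⊆ Wbd, IsCompact K → ∃ C : ℝ≥0∞, C < ⊤ ∧ ∀ᶠ k in (U : Filter ℕ), v k K ≤ C) :
    ∃ μ, RadonOn Wbd μ ∧ IsVagueLim U Wbd v μ := by
  have : LocallyCompactSpace Wbd := isOpen_Wbd.locallyCompactSpace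
  have hemb := MeasurableEmbedding.subtype_coe isOpen_Wbd.measurableSet
  have hcomap : ∀ k (A : Set Wbd), (v k).comap Subtype.val A = v k (Subtype.val '' A) :=
    fun k A => hemb.comap_apply (v k) A
  have himage : ∀ A ⊆ Wbd, Subtype.val '' (Subtype.val ⁻¹' A : Set Wbd) = A := fun A hA => by
    rw [Subtype.image_preimage_coe, inter_eq_right.2 hA]
  have hcompact : ∀ K ⊆ Wbd, IsCompact K → IsCompact (Subtype.val ⁻¹' K : Set Wbd) :=
    fun K hKW hK => by rwa [Subtype.isCompact_iff, himage K hKW]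
  obtain ⟨m, hm, hmO, hmK⟩ := exists_vague_ultraLim (X := Wbd) U
    (fun k => (v k).comap Subtype.val)
    (fun K hK => by
      simp only [hcomap]
      exact hb _ (by simp) (hK.image continuous_subtype_val))
  refine ⟨m.map Subtype.val, radonOn_of_compact_lt_top isOpen_Wbd.measurableSet ?_ ?_, ?_, ?_⟩
  · rw [hemb.map_apply]
    convert measure_empty (μ := m)
    ext x
    simp
  · intro K hKW hK
    rw [hemb.map_apply]
    exact (hcompact K hKW hK).measure_lt_top
  · intro O hOW hO
    have h := hmO _ (hO.preimage continuous_subtype_val)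
    simp only [hcomap, himage O hOW] at h
    rwa [hemb.map_apply]
  · intro K hKW hK
    have h := hmK _ (hcompact K hKW hK)
    simp only [hcomap, himage K hKW] at h
    rwa [hemb.map_apply]

/-- Pairs of points which are far from the diagonal and at distance at most `r`. -/
def nearPairs (r : ℝ) : Set (P2 × P2) :=
  {p | dist p.1 p.2 ≤ r ∧ 2 * r ≤ p.1.2 - p.1.1 ∧ 2 * r ≤ p.2.2 - p.2.1}

theorem isClosed_nearPairs (r : ℝ) : IsClosed (nearPairs r) := by
  have h1 : IsClosed {p : P2 × P2 | dist p.1 p.2 ≤ r} :=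
    isClosed_le (by fun_prop) continuous_const
  have h2 : IsClosed {p : P2 × P2 | 2 * r ≤ p.1.2 - p.1.1} :=
    isClosed_le continuous_const (by fun_prop)
  have h3 : IsClosed {p : P2 × P2 | 2 * r ≤ p.2.2 - p.2.1} :=
    isClosed_le continuous_const (by fun_prop)
  exact h1.inter (h2.inter h3)

/-- The part of an almost optimal coupling that involves points far from the diagonal. -/
theorem exists_partial_plan {μ ν : Measure P2} {r : ℝ} (hr : 0 < r)
    (h : OT μ ν < ENNReal.ofReal r) :
    ∃ ρ : Measure (P2 × P2), (∀ᵐ p ∂ρ, p ∈ nearPairs r) ∧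
      (∀ A ⊆ Wbd, MeasurableSet A → ρ (Prod.fst ⁻¹' A) ≤ μ A) ∧
      (∀ A ⊆ Weps (4 * r), MeasurableSet A → μ A ≤ ρ (Prod.fst ⁻¹' A)) ∧
      (∀ A ⊆ Wbd, MeasurableSet A → ρ (Prod.snd ⁻¹' A) ≤ ν A) ∧
      (∀ A ⊆ Weps (4 * r), MeasurableSet A → ν A ≤ ρ (Prod.snd ⁻¹' A)) := by
  obtain ⟨π, hπ, hae⟩ := exists_coupling_of_OT_lt h
  let T : Set (P2 × P2) := Prod.fst ⁻¹' Weps (4 * r) ∪ Prod.snd ⁻¹' Weps (4 * r)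
  have hT : MeasurableSet T := (measurable_fst (isOpen_Weps _).measurableSet).union
    (measurable_snd (isOpen_Weps _).measurableSet)
  have hWW : Weps (4 * r) ⊆ Wbd := Weps_subset_Wbd (by linarith)
  refine ⟨π.restrict T, ?_, fun A hAW hA => ?_, fun A hAW hA => ?_, fun A hAW hA => ?_,
    fun A hAW hA => ?_⟩
  · rw [ae_restrict_iff' hT]
    filter_upwards [hae] with p hp hpT
    have hg := gap_sub_le_dist p.1 p.2
    have hg' := gap_sub_le_dist p.2 p.1
    rw [dist_comm] at hg'
    rcases hpT with hpT | hpT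
    · have hgap : p.1.2 - p.1.1 > 4 * r := hpT
      have hd := dist_lt_of_dW_lt hp.2 (by linarith)
      exact ⟨hd.le, by linarith, by linarith⟩
    · have hgap : p.2.2 - p.2.1 > 4 * r := hpT
      have hd := dist_lt_of_dW_lt (dW_comm p.1 p.2 ▸ hp.2) (by linarith)
      rw [dist_comm] at hd
      exact ⟨hd.le, by linarith, by linarith⟩
  · rw [← hπ.2.1 A hAW hA]
    refine (Measure.restrict_apply_le _ _).trans (measure_mono_ae ?_)
    filter_upwards [hae] with p hp hpA
    exact ⟨hpA, hp.1.2⟩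
  · rw [← hπ.2.1 A (hAW.trans hWW) hA, Measure.restrict_apply (measurable_fst hA)]
    exact measure_mono fun p hp => ⟨hp.1, Or.inl (hAW hp.1)⟩
  · rw [← hπ.2.2 A hAW hA]
    refine (Measure.restrict_apply_le _ _).trans (measure_mono_ae ?_)
    filter_upwards [hae] with p hp hpA
    exact ⟨hp.1.1, hpA⟩
  · rw [← hπ.2.2 A (hAW.trans hWW) hA, Measure.restrict_apply (measurable_snd hA)]
    exact measure_mono fun p hp => ⟨hp.2, Or.inr (hAW hp.2)⟩

/-- Closed balls around an off-diagonally finite measure are closed under vague limits, up to a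
multiplicative constant. -/
theorem OT_le_of_isVagueLim {U : Ultrafilter ℕ} {w v' : Measure P2} {v : ℕ → Measure P2} {r : ℝ}
    (hr : 0 < r) (hw : w ∈ Mf) (hv' : RadonOn Wbd v') (hfin : v' (Weps (4 * r)) < ⊤)
    (hv : IsVagueLim U Wbd v v') (h : ∀ᶠ k in (U : Filter ℕ), OT w (v k) < ENNReal.ofReal r) :
    OT w v' ≤ ENNReal.ofReal (4 * r) := by
  have hex : ∀ k, ∃ ρ : Measure (P2 × P2), OT w (v k) < ENNReal.ofReal r →
      (∀ᵐ p ∂ρ, p ∈ nearPairs r) ∧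
      (∀ A ⊆ Wbd, MeasurableSet A → ρ (Prod.fst ⁻¹' A) ≤ w A) ∧
      (∀ A ⊆ Weps (4 * r), MeasurableSet A → w A ≤ ρ (Prod.fst ⁻¹' A)) ∧
      (∀ A ⊆ Wbd, MeasurableSet A → ρ (Prod.snd ⁻¹' A) ≤ v k A) ∧
      (∀ A ⊆ Weps (4 * r), MeasurableSet A → v k A ≤ ρ (Prod.snd ⁻¹' A)) := by
    intro k
    by_cases hk : OT w (v k) < ENNReal.ofReal r
    · obtain ⟨ρ, hρ⟩ := exists_partial_plan hr hk
      exact ⟨ρ, fun _ => hρ⟩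
    · exact ⟨0, fun h => absurd h hk⟩
  choose ρ hρ using hex
  have hbound : ∀ᶠ k in (U : Filter ℕ), ρ k univ ≤ w (Weps r) := by
    filter_upwards [h] with k hk
    obtain ⟨h1, h2, -⟩ := hρ k hk
    refine le_trans (measure_mono_ae ?_)
      (h2 _ (Weps_subset_Wbd hr.le) (isOpen_Weps r).measurableSet)
    filter_upwards [h1] with p hp _
    have := hp.2.1
    change p.1.2 - p.1.1 > r
    linarith
  obtain ⟨ρ', -, hρO, hρK⟩ := exists_vague_ultraLim U ρ fun K _ =>
    ⟨w (Weps r), hw.2 r hr, hbound.mono fun k hk => (measure_mono (subset_univ K)).trans hk⟩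
  have hlim : IsVagueLim U univ ρ ρ' := ⟨fun O _ => hρO O, fun K _ => hρK K⟩
  have : IsFiniteMeasure ρ' :=
    ⟨((hρO _ isOpen_univ).trans (ultraLim_le hbound)).trans_lt (hw.2 r hr)⟩
  have hnear : ∀ᶠ k in (U : Filter ℕ), ∀ᵐ p ∂ρ k, p ∈ nearPairs r :=
    h.mono fun k hk => (hρ k hk).1
  have hnear' : ∀ᵐ p ∂ρ', p ∈ nearPairs r :=
    le_antisymm ((hρO _ (isClosed_nearPairs r).isOpen_compl).trans
      (ultraLim_le (hnear.mono fun k hk => le_of_eq hk))) zero_le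
  have hW1 : ∀ᵐ p ∂ρ', p.1 ∈ Wbd := hnear'.mono fun p hp => by
    have := hp.2.1
    change p.1.1 < p.1.2
    linarith
  have hW2 : ∀ᵐ p ∂ρ', p.2 ∈ Wbd := hnear'.mono fun p hp => by
    have := hp.2.2
    change p.2.1 < p.2.2
    linarith
  obtain ⟨hfst, hfst'⟩ := marginal_of_isVagueLim continuous_fst (by linarith : 0 ≤ 4 * r) hlim
    (IsVagueLim.const U Wbd w) hnear
    (fun K hK => ⟨K ×ˢ Metric.cthickening r K, hK.prod hK.cthickening, fun p hp =>
      ⟨hp.1, Metric.mem_cthickening_of_dist_le p.2 p.1 r K hp.1 (dist_comm p.1 p.2 ▸ hp.2.1)⟩⟩)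
    (h.mono fun k hk => (hρ k hk).2.1) (h.mono fun k hk => (hρ k hk).2.2.1)
    hw.1.1.2.2.2 (hw.2 _ (by linarith)) hW1
  obtain ⟨hsnd, hsnd'⟩ := marginal_of_isVagueLim continuous_snd (by linarith : 0 ≤ 4 * r) hlim
    hv hnear
    (fun K hK => ⟨Metric.cthickening r K ×ˢ K, hK.cthickening.prod hK, fun p hp =>
      ⟨Metric.mem_cthickening_of_dist_le p.1 p.2 r K hp.1 hp.2.1, hp.1⟩⟩)
    (h.mono fun k hk => (hρ k hk).2.2.2.1) (h.mono fun k hk => (hρ k hk).2.2.2.2)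
    hv'.2.2.2 hfin hW2
  refine OT_le_of_partial_plan (by linarith) hw.1.1 hv' ?_ hfst hfst' hsnd hsnd'
  filter_upwards [hnear', hW1, hW2] with p hp hp1 hp2
  exact ⟨⟨Wbd_subset_Wcl hp1, Wbd_subset_Wcl hp2⟩, (min_le_left _ _).trans (by linarith [hp.1])⟩

theorem measure_Weps_eq_zero_of_persInf_lt_top {μ : Measure P2} (h : persInf μ < ⊤) :
    ∃ c, 0 < c ∧ μ (Weps c) = 0 := by
  refine ⟨2 * (persInf μ).toReal + 1, by positivity, ?_⟩
  refine measure_mono_null ?_ (measure_compl_msupport μ)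
  intro x hx hxs
  have h1 : ENNReal.ofReal (distDiag x) ≤ persInf μ :=
    le_iSup₂ (f := fun x (_ : x ∈ msupport μ) => ENNReal.ofReal (distDiag x)) x hxs
  have h2 := (ENNReal.ofReal_le_iff_le_toReal h.ne).1 h1
  have h3 : x.2 - x.1 > 2 * (persInf μ).toReal + 1 := hx
  rw [distDiag_eq] at h2
  linarith [le_abs_self (x.2 - x.1)]

theorem persInf_lt_top_of_measure_Weps_eq_zero {μ : Measure P2} (hμ : RadonOn Wbd μ) {c : ℝ}
    (h : μ (Weps c) = 0) : persInf μ < ⊤ := by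
  refine lt_of_le_of_lt (iSup₂_le fun x hx => ?_) (ENNReal.ofReal_lt_top (r := c / 2))
  refine ENNReal.ofReal_le_ofReal ?_
  have h1 : x ∈ Wcl := msupport_subset_of_isClosed isClosed_Wcl
    (measure_mono_null (compl_subset_compl.2 Wbd_subset_Wcl) hμ.1) hx
  have h2 : x ∈ (Weps c)ᶜ := msupport_subset_of_isClosed (isOpen_Weps c).isClosed_compl
    (by rwa [compl_compl]) hx
  rw [Wcl_eq] at h1
  have h3 : x.1 ≤ x.2 := h1
  have h4 : x.2 - x.1 ≤ c := not_lt.1 h2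
  rw [distDiag_eq, abs_of_nonneg (by linarith)]
  linarith

theorem exists_tendsto_of_cauchy {u : ℕ → Measure P2} (hu : ∀ n, u n ∈ Mf)
    (hc : ∀ ε : ℝ, 0 < ε → ∃ N : ℕ, ∀ m ≥ N, ∀ n ≥ N, OT (u m) (u n) < ENNReal.ofReal ε) :
    ∃ μ ∈ Mf, Tendsto (fun n => OT (u n) μ) atTop (𝓝 0) := by
  let U : Ultrafilter ℕ := hyperfilter ℕ
  have hU : ∀ N, ∀ᶠ k in (U : Filter ℕ), N ≤ k := fun N =>
    Nat.hyperfilter_le_atTop (eventually_ge_atTop N)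
  have hbound : ∀ ε, 0 < ε → ∃ C : ℝ≥0∞, C < ⊤ ∧ ∀ᶠ k in (U : Filter ℕ), u k (Weps ε) ≤ C := by
    intro ε hε
    obtain ⟨N, hN⟩ := hc (ε / 4) (by linarith)
    exact ⟨u N (Weps (ε - 2 * (ε / 4))), (hu N).2 _ (by linarith), (hU N).mono fun k hk =>
      measure_Weps_le_of_OT_lt (hN N le_rfl k hk) (by linarith) (by linarith)⟩
  obtain ⟨μ, hμ, hlim⟩ := exists_radonOn_isVagueLim U u fun K hKW hK => by
    obtain ⟨ε, hε, hKε⟩ := exists_subset_Weps hK hKW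
    obtain ⟨C, hC, h⟩ := hbound ε hε
    exact ⟨C, hC, h.mono fun k hk => (measure_mono hKε).trans hk⟩
  have hfin : ∀ ε, 0 < ε → μ (Weps ε) < ⊤ := by
    intro ε hε
    obtain ⟨C, hC, h⟩ := hbound ε hε
    exact ((hlim.1 _ (Weps_subset_Wbd hε.le) (isOpen_Weps ε)).trans (ultraLim_le h)).trans_lt hC
  have hpers : persInf μ < ⊤ := by
    obtain ⟨N, hN⟩ := hc 1 one_pos
    obtain ⟨c, hc0, hcN⟩ := measure_Weps_eq_zero_of_persInf_lt_top (hu N).1.2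
    refine persInf_lt_top_of_measure_Weps_eq_zero hμ (c := c + 2) (le_antisymm ?_ zero_le)
    refine (hlim.1 _ (Weps_subset_Wbd (by linarith)) (isOpen_Weps _)).trans
      (ultraLim_le ((hU N).mono fun k hk => ?_))
    have h := measure_Weps_le_of_OT_lt (ε := c + 2) (hN N le_rfl k hk) zero_le_one (by linarith)
    rwa [show c + 2 - 2 * 1 = c by ring, hcN] at h
  refine ⟨μ, ⟨⟨hμ, hpers⟩, hfin⟩, ENNReal.tendsto_nhds_zero.2 fun ε hε => ?_⟩
  obtain ⟨δ, hδ, hδε⟩ := ENNReal.lt_iff_exists_real_btwn.1 hε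
  have hδ0 : 0 < δ := ENNReal.ofReal_pos.1 hδε.1
  obtain ⟨N, hN⟩ := hc (δ / 4) (by linarith)
  filter_upwards [eventually_ge_atTop N] with n hn
  refine le_trans ?_ hδε.2.le
  have h := OT_le_of_isVagueLim (r := δ / 4) (by linarith) (hu n) hμ (hfin _ (by linarith)) hlim
    ((hU N).mono fun k hk => hN n hn k hk)
  rwa [show 4 * (δ / 4) = δ by ring] at h

/-- `M_f^∞` is closed in the complete metric space `(M^∞, OT_∞)`
(formulated sequentially), and hence `(M_f^∞, OT_∞)` is complete: every Cauchy sequence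
in `M_f^∞` converges, in the distance `OT_∞`, to an element of `M_f^∞`. -/
theorem Mf_closed_and_complete :
    (∀ μ ∈ MInf, ∀ u : ℕ → Measure P2, (∀ n, u n ∈ Mf) →
      Tendsto (fun n => OT (u n) μ) atTop (𝓝 0) → μ ∈ Mf) ∧
    (∀ u : ℕ → Measure P2, (∀ n, u n ∈ Mf) →
      (∀ ε : ℝ, 0 < ε → ∃ N : ℕ, ∀ m ≥ N, ∀ n ≥ N, OT (u m) (u n) < ENNReal.ofReal ε) →
      ∃ μ ∈ Mf, Tendsto (fun n => OT (u n) μ) atTop (𝓝 0)) := by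
  exact ⟨fun _ hμ _ hu h => mem_Mf_of_tendsto hμ hu h,
    fun _ hu hc => exists_tendsto_of_cauchy hu hc⟩
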